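/- Let (a_n) and (b_n) be real sequences with a_n > 0 for all n, Σ_{n=1}^∞ a_n < ∞ and Σ_{n=1}^∞ a_n |b_n| < ∞. Define f : ℝ → ℝ by f(x) = Σ_{n=1}^∞ a_n sin(b_n x)/|x| for x ≠ 0 and f(0) = 0. Then f is locally integrable, and for every s ∈ ℝ not in the closure of the set {b_n : n ∈ ℕ} ∪ {−b_n : n ∈ ℕ}, the Fourier transform f̂(s) exists and f̂(s) = i · Σ_{n=1}^∞ a_n log|(s − b_n)/(s + b_n)| (each summand with b_n = 0 being 0, and the series converging absolutely). -/

import Mathlib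

open MeasureTheory Filter

/-- The Fourier transform of `f` exists at `s` with value `L`:
`∫_{-T₁}^{T₂} e^{-isx} f(x) dx → L` as `T₁ → ∞` and `T₂ → ∞` independently. -/
def HasFourierHK (f : ℝ → ℂ) (s : ℝ) (L : ℂ) : Prop :=
  Tendsto (fun T : ℝ × ℝ =>
      ∫ x in (-T.1)..T.2, Complex.exp (-(Complex.I * (s : ℂ) * (x : ℂ))) * f x)
    (atTop ×ˢ atTop) (nhds L)

/-!
By the Dirichlet test, `∫ e^{-isx} sin(bx) / x` over `[T, U]` is `O(1/T)` when `s ≠ ±b`, with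
constant `|s - b|⁻¹ + |s + b|⁻¹`. Splitting the truncated transform of `sin(bx)/|x|` at `0` gives
`H(T₂) - conj (H(T₁))`, where `H(T)` is the integral of `e^{-isx} sin(bx) / x` over `[0, T]`. Since
`H(T₂) - H(T₁) → 0`, the transform is `2i lim Im H`, and
`Im (e^{-isx} sin(bx)) = (cos((s + b)x) - cos((s - b)x)) / 2` turns `Im H` into a Frullani integral
with limit `log|(s - b)/(s + b)| / 2`. For `T₁, T₂ ≥ 1` the truncated transforms are bounded by
`2 (|b| + |s - b|⁻¹ + |s + b|⁻¹)`, so the series is transformed term by term by dominated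
convergence.
-/

open Set
open scoped Topology Interval ComplexConjugate

section OscillatoryIntegral

variable {E : Type*} [NormedAddCommGroup E] [NormedSpace ℝ E] [CompleteSpace E]
  {g G : ℝ → E} {C : ℝ}

theorem norm_integral_smul_le_of_deriv_nonpos {φ φ' : ℝ → ℝ} {a b : ℝ} (hab : a ≤ b)
    (hφ : ∀ x ∈ Icc a b, HasDerivAt φ (φ' x) x) (hφ' : ∀ x ∈ Icc a b, φ' x ≤ 0) (hφb : 0 ≤ φ b)
    (hG : ∀ x ∈ Icc a b, HasDerivAt G (g x) x) (hGC : ∀ x ∈ Icc a b, ‖G x‖ ≤ C)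
    (hg : IntervalIntegrable g volume a b) :
    ‖∫ x in a..b, φ x • g x‖ ≤ 2 * C * φ a := by
  rw [← uIcc_of_le hab] at hφ hG
  have hφ'_int : IntervalIntegrable (fun x ↦ -φ' x) volume a b := by
    refine intervalIntegral.intervalIntegrable_deriv_of_nonneg (g := fun x ↦ -φ x)
      (fun x hx ↦ (hφ x hx).neg.continuousAt.continuousWithinAt)
      (fun x hx ↦ (hφ x (Ioo_subset_Icc_self hx)).neg) fun x hx ↦ ?_
    rw [min_eq_left hab, max_eq_right hab] at hx
    exact neg_nonneg.mpr (hφ' x (Ioo_subset_Icc_self hx))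
  have hφ_sub : ∫ x in a..b, -φ' x = φ a - φ b := by
    rw [intervalIntegral.integral_eq_sub_of_hasDerivAt (fun x hx ↦ (hφ x hx).neg) hφ'_int]
    simp only [Pi.neg_apply]
    ring
  have hφ_le : 0 ≤ φ a - φ b :=
    hφ_sub ▸ intervalIntegral.integral_nonneg hab fun x hx ↦ neg_nonneg.mpr (hφ' x hx)
  have hremainder : ‖∫ x in a..b, φ' x • G x‖ ≤ C * (φ a - φ b) := by
    rw [← hφ_sub, ← intervalIntegral.integral_const_mul]
    refine intervalIntegral.norm_integral_le_of_norm_le hab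
      (.of_forall fun x hx ↦ ?_) (hφ'_int.const_mul C)
    have hx := Ioc_subset_Icc_self hx
    rw [norm_smul, Real.norm_of_nonpos (hφ' x hx), mul_comm]
    exact mul_le_mul_of_nonneg_right (hGC x hx) (neg_nonneg.mpr (hφ' x hx))
  have hboundary : ∀ x ∈ Icc a b, 0 ≤ φ x → ‖φ x • G x‖ ≤ φ x * C := fun x hx h0 ↦ by
    rw [norm_smul, Real.norm_of_nonneg h0]
    exact mul_le_mul_of_nonneg_left (hGC x hx) h0
  have hφ'_int' : IntervalIntegrable φ' volume a b := by
    simpa only [Pi.neg_def, neg_neg] using hφ'_int.neg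
  calc ‖∫ x in a..b, φ x • g x‖
      = ‖φ b • G b - φ a • G a - ∫ x in a..b, φ' x • G x‖ := by
        rw [intervalIntegral.integral_smul_deriv_eq_deriv_smul hφ hG hφ'_int' hg]
    _ ≤ ‖φ b • G b‖ + ‖φ a • G a‖ + ‖∫ x in a..b, φ' x • G x‖ :=
        (norm_sub_le _ _).trans (by gcongr; exact norm_sub_le _ _)
    _ ≤ φ b * C + φ a * C + C * (φ a - φ b) := by
        gcongr
        · exact hboundary b (right_mem_Icc.mpr hab) hφb
        · exact hboundary a (left_mem_Icc.mpr hab) (by linarith)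
    _ = 2 * C * φ a := by ring

theorem norm_integral_inv_smul_le (hG : ∀ x, HasDerivAt G (g x) x) (hGC : ∀ x, ‖G x‖ ≤ C)
    (hg : Continuous g) {T U : ℝ} (hT : 0 < T) (hTU : T ≤ U) :
    ‖∫ x in T..U, x⁻¹ • g x‖ ≤ 2 * C * T⁻¹ :=
  norm_integral_smul_le_of_deriv_nonpos hTU
    (fun _ hx ↦ hasDerivAt_inv (hT.trans_le hx.1).ne')
    (fun _ _ ↦ neg_nonpos.mpr (by positivity)) (inv_nonneg.mpr (hT.le.trans hTU))
    (fun x _ ↦ hG x) (fun x _ ↦ hGC x) (hg.intervalIntegrable T U)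

theorem tendsto_integral_inv_smul_atTop (hG : ∀ x, HasDerivAt G (g x) x)
    (hGC : ∀ x, ‖G x‖ ≤ C) (hg : Continuous g) :
    Tendsto (fun T : ℝ × ℝ ↦ ∫ x in T.1..T.2, x⁻¹ • g x) (atTop ×ˢ atTop) (𝓝 0) := by
  have hbound : ∀ T U : ℝ, 0 < T → 0 < U →
      ‖∫ x in T..U, x⁻¹ • g x‖ ≤ 2 * C * (T⁻¹ + U⁻¹) := by
    intro T U hT hU
    have hC : 0 ≤ C := (norm_nonneg _).trans (hGC 0)
    wlog hTU : T ≤ U generalizing T U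
    · rw [intervalIntegral.integral_symm, norm_neg, add_comm]
      exact this U T hU hT (le_of_not_ge hTU)
    · refine (norm_integral_inv_smul_le hG hGC hg hT hTU).trans ?_
      gcongr
      exact le_add_of_nonneg_right (by positivity)
  have hinv : Tendsto (fun T : ℝ × ℝ ↦ 2 * C * (T.1⁻¹ + T.2⁻¹)) (atTop ×ˢ atTop) (𝓝 0) := by
    simpa using ((tendsto_inv_atTop_zero.comp tendsto_fst).add
      (tendsto_inv_atTop_zero.comp tendsto_snd)).const_mul (2 * C)
  refine squeeze_zero_norm' ?_ hinv
  filter_upwards [(eventually_gt_atTop 0).prod_mk (eventually_gt_atTop 0)] with T hT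
  exact hbound T.1 T.2 hT.1 hT.2

end OscillatoryIntegral

section Frullani

variable {E : Type*} [NormedAddCommGroup E] [NormedSpace ℝ E] [CompleteSpace E]

theorem integral_inv_smul_comp_mul_sub_comp_mul {f : ℝ → E} {L : E} {p q T : ℝ}
    (hf : LocallyIntegrableOn f (Ioi 0)) (hL : Tendsto f (𝓝[>] 0) (𝓝 L)) (hp : 0 < p) (hq : 0 < q)
    (hT : 0 < T) (hint : IntervalIntegrable (fun x ↦ x⁻¹ • (f (p * x) - f (q * x))) volume 0 T) :
    ∫ x in 0..T, x⁻¹ • (f (p * x) - f (q * x))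
      = Real.log (q / p) • L - ∫ x in (p * T)..(q * T), x⁻¹ • f x := by
  have hlhs : Tendsto (fun ε ↦ ∫ x in ε..T, x⁻¹ • (f (p * x) - f (q * x))) (𝓝[>] 0)
      (𝓝 (∫ x in 0..T, x⁻¹ • (f (p * x) - f (q * x)))) := by
    have hcont := intervalIntegral.continuousOn_primitive_interval_left
      ((intervalIntegrable_iff' (by simp)).mp hint)
    rw [← nhdsWithin_Ioo_eq_nhdsGT hT]
    exact (hcont 0 left_mem_uIcc).mono (uIcc_of_le hT.le ▸ Ioo_subset_Icc_self)
  have hrhs := (Frullani.tendsto_integral_inv_smul_nhdsWithin hf hp hq hL).sub_const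
    (∫ x in (p * T)..(q * T), x⁻¹ • f x)
  refine tendsto_nhds_unique hlhs (hrhs.congr' ?_)
  filter_upwards [self_mem_nhdsWithin] with ε (hε : 0 < ε)
  have hinv_int {u v : ℝ} (hu : 0 < u) (hv : 0 < v) :
      IntervalIntegrable (fun x ↦ x⁻¹ • f x) volume u v :=
    Frullani.intervalIntegrable_inv_smul hf hu hv
  simp_rw [smul_sub]
  rw [intervalIntegral.integral_sub (Frullani.intervalIntegrable_inv_smul_comp_mul hf hε hT hp)
      (Frullani.intervalIntegrable_inv_smul_comp_mul hf hε hT hq),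
    Frullani.integral_comp_mul_inv_smul hp.ne', Frullani.integral_comp_mul_inv_smul hq.ne',
    intervalIntegral.integral_interval_sub_interval_comm
      (hinv_int (mul_pos hp hε) (mul_pos hp hT)) (hinv_int (mul_pos hq hε) (mul_pos hq hT))
      (hinv_int (mul_pos hp hε) (mul_pos hq hε))]

theorem intervalIntegrable_inv_mul_cos_sub_cos (p q T U : ℝ) :
    IntervalIntegrable (fun x ↦ x⁻¹ * (Real.cos (p * x) - Real.cos (q * x))) volume T U := by
  refine (intervalIntegrable_const (c := |p - q|)).mono_fun'
    (by fun_prop : Measurable _).aestronglyMeasurable (.of_forall fun x ↦ ?_)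
  simp only [norm_mul, norm_inv]
  refine inv_mul_le_of_le_mul₀ (norm_nonneg _) (abs_nonneg _) ?_
  calc |Real.cos (p * x) - Real.cos (q * x)| ≤ |p * x - q * x| := Real.abs_cos_sub_cos_le _ _
    _ = |x| * |p - q| := by rw [← sub_mul, abs_mul, mul_comm]

theorem tendsto_integral_inv_mul_cos_sub_cos {p q : ℝ} (hp : p ≠ 0) (hq : q ≠ 0) :
    Tendsto (fun T ↦ ∫ x in 0..T, x⁻¹ * (Real.cos (p * x) - Real.cos (q * x))) atTop
      (𝓝 (Real.log |q / p|)) := by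
  wlog hpos : 0 < p ∧ 0 < q generalizing p q
  · have habs (r x : ℝ) : Real.cos (|r| * x) = Real.cos (r * x) := by
      rcases abs_choice r with h | h <;> simp only [h, neg_mul, Real.cos_neg]
    simpa only [habs, ← abs_div, abs_abs] using
      this (abs_ne_zero.mpr hp) (abs_ne_zero.mpr hq) ⟨abs_pos.mpr hp, abs_pos.mpr hq⟩
  obtain ⟨hp, hq⟩ := hpos
  have htail : Tendsto (fun T ↦ ∫ x in (p * T)..(q * T), x⁻¹ • Real.cos x) atTop (𝓝 0) :=
    (tendsto_integral_inv_smul_atTop Real.hasDerivAt_sin Real.abs_sin_le_one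
      Real.continuous_cos).comp
      ((tendsto_id.const_mul_atTop hp).prodMk (tendsto_id.const_mul_atTop hq))
  have hlim := htail.const_sub (Real.log |q / p|)
  rw [sub_zero] at hlim
  refine hlim.congr' ?_
  filter_upwards [eventually_gt_atTop 0] with T hT
  have hcos : Tendsto Real.cos (𝓝[>] 0) (𝓝 1) :=
    Real.cos_zero ▸ Real.continuous_cos.continuousWithinAt
  have h := integral_inv_smul_comp_mul_sub_comp_mul
    (Real.continuous_cos.locallyIntegrable.locallyIntegrableOn _) hcos hp hq hT
    (intervalIntegrable_inv_mul_cos_sub_cos p q 0 T)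
  rw [smul_eq_mul, mul_one] at h
  rw [abs_of_pos (div_pos hq hp)]
  exact h.symm

end Frullani

section Kernel

/-- The oscillating factor `x ↦ e^{-isx} sin(bx)`; the Fourier integrand of `sin(bx)/|x|` on the
positive half-line is `x⁻¹` times it. -/
noncomputable def expMulSin (s b x : ℝ) : ℂ :=
  Complex.exp (-(Complex.I * s * x)) * Real.sin (b * x)

/-- The integral of `e^{-isx} sin(bx) / x` over `[0, T]`. -/
noncomputable def halfLineIntegral (s b T : ℝ) : ℂ :=
  ∫ x in 0..T, x⁻¹ • expMulSin s b x

variable {s b T U : ℝ}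

theorem continuous_expMulSin : Continuous (expMulSin s b) := by
  unfold expMulSin
  fun_prop

theorem norm_exp_neg_I_mul_mul (s x : ℝ) : ‖Complex.exp (-(Complex.I * s * x))‖ = 1 := by
  simpa [mul_assoc] using Complex.norm_exp_I_mul_ofReal (-(s * x))

theorem norm_inv_smul_expMulSin_le (s b x : ℝ) : ‖x⁻¹ • expMulSin s b x‖ ≤ |b| := by
  rw [norm_smul, norm_inv, expMulSin, norm_mul, norm_exp_neg_I_mul_mul, one_mul,
    Complex.norm_real]
  refine inv_mul_le_of_le_mul₀ (norm_nonneg _) (abs_nonneg _) ?_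
  calc |Real.sin (b * x)| ≤ |b * x| := Real.abs_sin_le_abs
    _ = |x| * |b| := by rw [abs_mul, mul_comm]

theorem intervalIntegrable_inv_smul_expMulSin (s b T U : ℝ) :
    IntervalIntegrable (fun x ↦ x⁻¹ • expMulSin s b x) volume T U :=
  (intervalIntegrable_const (c := |b|)).mono_fun'
    (measurable_inv.smul continuous_expMulSin.measurable).aestronglyMeasurable
    (.of_forall (norm_inv_smul_expMulSin_le s b))

/-- The primitive of `e^{-isx} sin(bx)` obtained by writing the sine through exponentials. -/
noncomputable def expMulSinPrimitive (s b x : ℝ) : ℂ :=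
  (Complex.exp (-(Complex.I * (s - b : ℝ) * x)) / (s - b : ℝ)
    - Complex.exp (-(Complex.I * (s + b : ℝ) * x)) / (s + b : ℝ)) / 2

theorem hasDerivAt_expMulSinPrimitive (hsub : s - b ≠ 0) (hadd : s + b ≠ 0) (x : ℝ) :
    HasDerivAt (expMulSinPrimitive s b) (expMulSin s b x) x := by
  have hexp (c : ℝ) (hc : c ≠ 0) :
      HasDerivAt (fun x : ℝ ↦ Complex.exp (-(Complex.I * c * x)) / c)
        (-Complex.I * Complex.exp (-(Complex.I * c * x))) x := by
    have hlin : HasDerivAt (fun x : ℝ ↦ -(Complex.I * c * x)) (-(Complex.I * c)) x := by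
      simpa using ((hasDerivAt_id x).ofReal_comp.const_mul (Complex.I * c)).fun_neg
    refine (hlin.cexp.div_const _).congr_deriv ?_
    have : (c : ℂ) ≠ 0 := by exact_mod_cast hc
    field_simp
  refine (((hexp _ hsub).sub (hexp _ hadd)).div_const 2).congr_deriv ?_
  have hsplit (c : ℝ) : Complex.exp (-(Complex.I * (s + c : ℝ) * x))
      = Complex.exp (-(Complex.I * s * x)) * Complex.exp (-(c * x) * Complex.I) := by
    rw [← Complex.exp_add]
    push_cast
    ring_nf
  rw [sub_eq_add_neg s b, hsplit, hsplit, expMulSin, Complex.ofReal_sin, Complex.sin]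
  push_cast
  ring_nf

theorem norm_expMulSinPrimitive_le (s b x : ℝ) :
    ‖expMulSinPrimitive s b x‖ ≤ (|s - b|⁻¹ + |s + b|⁻¹) / 2 := by
  have hterm (c : ℝ) : ‖Complex.exp (-(Complex.I * c * x)) / c‖ = |c|⁻¹ := by
    rw [norm_div, norm_exp_neg_I_mul_mul, Complex.norm_real, Real.norm_eq_abs, one_div]
  rw [expMulSinPrimitive, norm_div, Complex.norm_ofNat]
  gcongr
  exact (norm_sub_le _ _).trans_eq (by rw [hterm, hterm])

theorem halfLineIntegral_sub :
    halfLineIntegral s b U - halfLineIntegral s b T = ∫ x in T..U, x⁻¹ • expMulSin s b x :=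
  intervalIntegral.integral_interval_sub_left (intervalIntegrable_inv_smul_expMulSin s b 0 U)
    (intervalIntegrable_inv_smul_expMulSin s b 0 T)

theorem tendsto_halfLineIntegral_sub (hsub : s - b ≠ 0) (hadd : s + b ≠ 0) :
    Tendsto (fun T : ℝ × ℝ ↦ halfLineIntegral s b T.2 - halfLineIntegral s b T.1)
      (atTop ×ˢ atTop) (𝓝 0) := by
  simpa only [halfLineIntegral_sub] using
    tendsto_integral_inv_smul_atTop (hasDerivAt_expMulSinPrimitive hsub hadd)
      (norm_expMulSinPrimitive_le s b) continuous_expMulSin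

theorem norm_halfLineIntegral_le (hsub : s - b ≠ 0) (hadd : s + b ≠ 0) (hT : 1 ≤ T) :
    ‖halfLineIntegral s b T‖ ≤ |b| + (|s - b|⁻¹ + |s + b|⁻¹) := by
  have hnear : ‖halfLineIntegral s b 1‖ ≤ |b| := by
    simpa [halfLineIntegral] using intervalIntegral.norm_integral_le_of_norm_le_const
      fun x (_ : x ∈ Ι (0 : ℝ) 1) ↦ norm_inv_smul_expMulSin_le s b x
  have hfar : ‖halfLineIntegral s b T - halfLineIntegral s b 1‖ ≤ |s - b|⁻¹ + |s + b|⁻¹ := by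
    rw [halfLineIntegral_sub]
    refine (norm_integral_inv_smul_le (hasDerivAt_expMulSinPrimitive hsub hadd)
      (norm_expMulSinPrimitive_le s b) continuous_expMulSin one_pos hT).trans_eq ?_
    ring
  calc ‖halfLineIntegral s b T‖
      = ‖halfLineIntegral s b 1 + (halfLineIntegral s b T - halfLineIntegral s b 1)‖ := by
        rw [add_sub_cancel]
    _ ≤ |b| + (|s - b|⁻¹ + |s + b|⁻¹) := norm_add_le_of_le hnear hfar

theorem expMulSin_im (s b x : ℝ) :
    (expMulSin s b x).im = (Real.cos ((s + b) * x) - Real.cos ((s - b) * x)) / 2 := by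
  have hexp : (Complex.exp (-(Complex.I * s * x))).im = -Real.sin (s * x) := by
    have h : -(Complex.I * s * x) = (-(s * x) : ℝ) * Complex.I := by push_cast; ring
    rw [h, Complex.exp_ofReal_mul_I_im, Real.sin_neg]
  rw [expMulSin, Complex.im_mul_ofReal, hexp, add_mul, sub_mul]
  linarith [Real.two_mul_sin_mul_sin (s * x) (b * x)]

theorem halfLineIntegral_im (s b T : ℝ) :
    (halfLineIntegral s b T).im
      = (∫ x in 0..T, x⁻¹ * (Real.cos ((s + b) * x) - Real.cos ((s - b) * x))) / 2 := by
  rw [← intervalIntegral.integral_div, halfLineIntegral, ← Complex.imCLM_apply,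
    ← Complex.imCLM.intervalIntegral_comp_comm (intervalIntegrable_inv_smul_expMulSin s b 0 T)]
  refine intervalIntegral.integral_congr fun x _ ↦ ?_
  simp only [Complex.imCLM_apply, Complex.smul_im, expMulSin_im, smul_eq_mul, mul_div_assoc]

theorem tendsto_halfLineIntegral_im (hsub : s - b ≠ 0) (hadd : s + b ≠ 0) :
    Tendsto (fun T ↦ (halfLineIntegral s b T).im) atTop
      (𝓝 (Real.log |(s - b) / (s + b)| / 2)) := by
  simpa only [halfLineIntegral_im] using
    (tendsto_integral_inv_mul_cos_sub_cos hadd hsub).div_const 2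

end Kernel

section FourierTransform

/-- The truncated Fourier integral `∫_{-T₁}^{T₂} e^{-isx} f(x) dx`, whose limit is the Fourier
transform in the sense of `HasFourierHK`. -/
noncomputable def truncatedFourier (f : ℝ → ℂ) (s : ℝ) (T : ℝ × ℝ) : ℂ :=
  ∫ x in (-T.1)..T.2, Complex.exp (-(Complex.I * s * x)) * f x

theorem truncatedFourier_const_mul (c : ℂ) (f : ℝ → ℂ) (s : ℝ) (T : ℝ × ℝ) :
    truncatedFourier (fun x ↦ c * f x) s T = c * truncatedFourier f s T := by
  simp only [truncatedFourier, mul_left_comm _ c, intervalIntegral.integral_const_mul]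

theorem HasFourierHK.const_mul {f : ℝ → ℂ} {s : ℝ} {L : ℂ} (h : HasFourierHK f s L) (c : ℂ) :
    HasFourierHK (fun x ↦ c * f x) s (c * L) :=
  (Tendsto.const_mul c h).congr fun T ↦ (truncatedFourier_const_mul c f s T).symm

section Series

variable {ι : Type*} [Countable ι] {f : ι → ℝ → ℂ} {M : ι → ℝ}

theorem truncatedFourier_tsum (hf : ∀ n, Measurable (f n)) (hM : Summable M)
    (hfM : ∀ n x, ‖f n x‖ ≤ M n) (s : ℝ) (T : ℝ × ℝ) :
    truncatedFourier (fun x ↦ ∑' n, f n x) s T = ∑' n, truncatedFourier (f n) s T := by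
  refine (HasSum.tsum_eq ?_).symm
  refine intervalIntegral.hasSum_integral_of_dominated_convergence (fun n _ ↦ M n)
    (fun n ↦ ?_) (fun n ↦ .of_forall fun x _ ↦ ?_) (.of_forall fun _ _ ↦ hM)
    intervalIntegrable_const (.of_forall fun x _ ↦ ?_)
  · exact Measurable.aestronglyMeasurable (by fun_prop)
  · rw [norm_mul, norm_exp_neg_I_mul_mul, one_mul]
    exact hfM n x
  · exact (Summable.of_norm_bounded hM (hfM · x)).hasSum.mul_left _

theorem HasFourierHK.tsum {s : ℝ} {L : ι → ℂ} {B : ι → ℝ} (h : ∀ n, HasFourierHK (f n) s (L n))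
    (hf : ∀ n, Measurable (f n)) (hM : Summable M) (hfM : ∀ n x, ‖f n x‖ ≤ M n)
    (hB : Summable B)
    (hfB : ∀ᶠ T in atTop ×ˢ atTop, ∀ n, ‖truncatedFourier (f n) s T‖ ≤ B n) :
    HasFourierHK (fun x ↦ ∑' n, f n x) s (∑' n, L n) :=
  (tendsto_tsum_of_dominated_convergence hB h hfB).congr fun T ↦
    (truncatedFourier_tsum hf hM hfM s T).symm

end Series

/-- The building block `x ↦ sin(bx)/|x|` of the series; its value at `0` is `0`, by division by
zero. -/
noncomputable def sinDivAbs (b x : ℝ) : ℝ := Real.sin (b * x) / |x|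

theorem measurable_sinDivAbs (b : ℝ) : Measurable (sinDivAbs b) := by
  unfold sinDivAbs
  fun_prop

theorem abs_sinDivAbs_le (b x : ℝ) : |sinDivAbs b x| ≤ |b| := by
  rw [sinDivAbs, abs_div, abs_abs]
  refine div_le_of_le_mul₀ (abs_nonneg _) (abs_nonneg _) ?_
  exact Real.abs_sin_le_abs.trans_eq (abs_mul b x)

variable {s b : ℝ}

theorem exp_mul_sinDivAbs_of_nonneg {x : ℝ} (hx : 0 ≤ x) :
    Complex.exp (-(Complex.I * s * x)) * sinDivAbs b x = x⁻¹ • expMulSin s b x := by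
  rw [sinDivAbs, abs_of_nonneg hx, expMulSin, Complex.real_smul]
  push_cast
  ring

theorem exp_mul_sinDivAbs_neg (s b x : ℝ) :
    Complex.exp (-(Complex.I * s * (-x : ℝ))) * sinDivAbs b (-x)
      = -conj (Complex.exp (-(Complex.I * s * x)) * sinDivAbs b x) := by
  rw [map_mul, ← Complex.exp_conj, Complex.conj_ofReal, sinDivAbs, sinDivAbs, abs_neg, mul_neg,
    Real.sin_neg, neg_div]
  simp

theorem intervalIntegrable_exp_mul_sinDivAbs (s b T U : ℝ) :
    IntervalIntegrable (fun x ↦ Complex.exp (-(Complex.I * s * x)) * sinDivAbs b x)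
      volume T U := by
  have hmeas := measurable_sinDivAbs b
  refine (intervalIntegrable_const (c := |b|)).mono_fun'
    (by fun_prop : Measurable _).aestronglyMeasurable (.of_forall fun x ↦ ?_)
  simp only [norm_mul, norm_exp_neg_I_mul_mul, one_mul, Complex.norm_real]
  exact abs_sinDivAbs_le b x

theorem integral_exp_mul_sinDivAbs {T : ℝ} (hT : 0 ≤ T) :
    ∫ x in 0..T, Complex.exp (-(Complex.I * s * x)) * sinDivAbs b x = halfLineIntegral s b T :=
  intervalIntegral.integral_congr fun _ hx ↦
    exp_mul_sinDivAbs_of_nonneg (uIcc_of_le hT ▸ hx).1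

theorem integral_neg_exp_mul_sinDivAbs {T : ℝ} (hT : 0 ≤ T) :
    ∫ x in (-T)..0, Complex.exp (-(Complex.I * s * x)) * sinDivAbs b x
      = -conj (halfLineIntegral s b T) := by
  rw [← integral_exp_mul_sinDivAbs hT, ← intervalIntegral.intervalIntegral_conj,
    ← intervalIntegral.integral_neg, ← neg_zero, ← intervalIntegral.integral_comp_neg, neg_zero]
  simp only [exp_mul_sinDivAbs_neg]

theorem truncatedFourier_sinDivAbs {T : ℝ × ℝ} (hT₁ : 0 ≤ T.1) (hT₂ : 0 ≤ T.2) :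
    truncatedFourier (fun x ↦ sinDivAbs b x) s T
      = halfLineIntegral s b T.2 - conj (halfLineIntegral s b T.1) := by
  rw [truncatedFourier, ← intervalIntegral.integral_add_adjacent_intervals
    (intervalIntegrable_exp_mul_sinDivAbs s b (-T.1) 0)
    (intervalIntegrable_exp_mul_sinDivAbs s b 0 T.2),
    integral_neg_exp_mul_sinDivAbs hT₁, integral_exp_mul_sinDivAbs hT₂]
  ring

theorem norm_truncatedFourier_sinDivAbs_le (hsub : s - b ≠ 0) (hadd : s + b ≠ 0) {T : ℝ × ℝ}
    (hT₁ : 1 ≤ T.1) (hT₂ : 1 ≤ T.2) :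
    ‖truncatedFourier (fun x ↦ sinDivAbs b x) s T‖ ≤ 2 * (|b| + (|s - b|⁻¹ + |s + b|⁻¹)) := by
  rw [truncatedFourier_sinDivAbs (zero_le_one.trans hT₁) (zero_le_one.trans hT₂), two_mul]
  refine norm_sub_le_of_le (norm_halfLineIntegral_le hsub hadd hT₂) ?_
  rw [RCLike.norm_conj]
  exact norm_halfLineIntegral_le hsub hadd hT₁

theorem hasFourierHK_sinDivAbs (hsub : s - b ≠ 0) (hadd : s + b ≠ 0) :
    HasFourierHK (fun x ↦ sinDivAbs b x) s (Complex.I * Real.log |(s - b) / (s + b)|) := by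
  have him : Tendsto (fun T : ℝ × ℝ ↦ Complex.I * (2 * (halfLineIntegral s b T.2).im : ℝ))
      (atTop ×ˢ atTop) (𝓝 (Complex.I * Real.log |(s - b) / (s + b)|)) := by
    have h := ((tendsto_halfLineIntegral_im hsub hadd).comp
      (tendsto_snd (f := atTop (α := ℝ)))).const_mul 2
    rw [mul_div_cancel₀ _ two_ne_zero] at h
    exact (h.ofReal).const_mul Complex.I
  have hdiff := (Complex.continuous_conj.tendsto 0).comp (tendsto_halfLineIntegral_sub hsub hadd)
  have hlim := him.add hdiff
  rw [map_zero, add_zero] at hlim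
  refine hlim.congr' ?_
  filter_upwards [(eventually_ge_atTop 0).prod_mk (eventually_ge_atTop 0)] with T hT
  refine Eq.trans ?_ (truncatedFourier_sinDivAbs hT.1 hT.2).symm
  rw [mul_comm, ← Complex.sub_conj, Function.comp_apply, map_sub]
  ring

theorem abs_log_abs_div_le (hsub : s - b ≠ 0) (hadd : s + b ≠ 0) :
    |Real.log (|(s - b) / (s + b)|)| ≤ 2 * (|b| + (|s - b|⁻¹ + |s + b|⁻¹)) := by
  have h := le_of_tendsto (hasFourierHK_sinDivAbs hsub hadd).norm <|
    ((eventually_ge_atTop 1).prod_mk (eventually_ge_atTop 1)).mono fun T hT ↦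
      norm_truncatedFourier_sinDivAbs_le hsub hadd hT.1 hT.2
  rwa [norm_mul, Complex.norm_I, one_mul, Complex.norm_real, Real.norm_eq_abs] at h

end FourierTransform

section SineSeries

variable {ι : Type*} {a b : ι → ℝ} {s : ℝ}

theorem ite_tsum_mul_sin_div_abs (a b : ι → ℝ) (x : ℝ) :
    (if x = 0 then 0 else ∑' n, a n * Real.sin (b n * x) / |x|)
      = ∑' n, a n * sinDivAbs (b n) x := by
  split_ifs with hx
  · simp [hx, sinDivAbs]
  · simp only [sinDivAbs, mul_div_assoc]

theorem norm_mul_sinDivAbs_le (a b x : ℝ) : ‖a * sinDivAbs b x‖ ≤ ‖a * |b|‖ := by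
  rw [norm_mul, norm_mul, Real.norm_eq_abs |b|, abs_abs]
  exact mul_le_mul_of_nonneg_left (abs_sinDivAbs_le b x) (norm_nonneg a)

theorem integrableOn_tsum_mul_sinDivAbs [Countable ι] (hab : Summable fun n ↦ a n * |b n|)
    {K : Set ℝ} (hK : volume K ≠ ⊤) :
    IntegrableOn (fun x ↦ ∑' n, a n * sinDivAbs (b n) x) K := by
  refine Measure.integrableOn_of_bounded (M := ∑' n, ‖a n * |b n|‖) hK
    (Measurable.tsum fun n ↦ (measurable_sinDivAbs (b n)).const_mul (a n)).aestronglyMeasurable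
    (.of_forall fun x ↦ ?_)
  exact tsum_of_norm_bounded hab.norm.hasSum fun n ↦ norm_mul_sinDivAbs_le (a n) (b n) x

theorem summable_abs_mul_two_mul_add (hab : Summable fun n ↦ a n * |b n|)
    (hs : Summable fun n ↦ a n * (|s - b n|⁻¹ + |s + b n|⁻¹)) :
    Summable fun n ↦ |a n| * (2 * (|b n| + (|s - b n|⁻¹ + |s + b n|⁻¹))) := by
  refine ((hab.abs.add hs.abs).mul_left 2).congr fun n ↦ ?_
  rw [abs_mul, abs_mul, abs_abs, abs_of_nonneg (a := |s - b n|⁻¹ + |s + b n|⁻¹) (by positivity)]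
  ring

theorem summable_abs_mul_log (hab : Summable fun n ↦ a n * |b n|)
    (hs : Summable fun n ↦ a n * (|s - b n|⁻¹ + |s + b n|⁻¹))
    (hsub : ∀ n, s - b n ≠ 0) (hadd : ∀ n, s + b n ≠ 0) :
    Summable fun n ↦ |a n * Real.log (|(s - b n) / (s + b n)|)| := by
  refine (summable_abs_mul_two_mul_add hab hs).of_nonneg_of_le (fun n ↦ abs_nonneg _) fun n ↦ ?_
  rw [abs_mul]
  gcongr
  exact abs_log_abs_div_le (hsub n) (hadd n)

theorem hasFourierHK_tsum_mul_sinDivAbs [Countable ι] (hab : Summable fun n ↦ a n * |b n|)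
    (hs : Summable fun n ↦ a n * (|s - b n|⁻¹ + |s + b n|⁻¹))
    (hsub : ∀ n, s - b n ≠ 0) (hadd : ∀ n, s + b n ≠ 0) :
    HasFourierHK (fun x ↦ (∑' n, a n * sinDivAbs (b n) x : ℝ)) s
      (Complex.I * (∑' n, a n * Real.log |(s - b n) / (s + b n)| : ℝ)) := by
  have hmeas (n : ι) : Measurable fun x ↦ (a n * sinDivAbs (b n) x : ℂ) :=
    (Complex.measurable_ofReal.comp (measurable_sinDivAbs (b n))).const_mul (a n : ℂ)
  have hbound (n : ι) (x : ℝ) : ‖(a n * sinDivAbs (b n) x : ℂ)‖ ≤ ‖a n * |b n|‖ := by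
    rw [← Complex.ofReal_mul, Complex.norm_real]
    exact norm_mul_sinDivAbs_le (a n) (b n) x
  have htrunc : ∀ᶠ T in atTop ×ˢ atTop, ∀ n,
      ‖truncatedFourier (fun x ↦ a n * sinDivAbs (b n) x) s T‖
        ≤ |a n| * (2 * (|b n| + (|s - b n|⁻¹ + |s + b n|⁻¹))) := by
    filter_upwards [(eventually_ge_atTop 1).prod_mk (eventually_ge_atTop 1)] with T hT n
    rw [truncatedFourier_const_mul, norm_mul, Complex.norm_real]
    exact mul_le_mul_of_nonneg_left
      (norm_truncatedFourier_sinDivAbs_le (hsub n) (hadd n) hT.1 hT.2) (norm_nonneg _)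
  have h := HasFourierHK.tsum
    (fun n ↦ (hasFourierHK_sinDivAbs (hsub n) (hadd n)).const_mul (a n))
    hmeas hab.norm hbound (summable_abs_mul_two_mul_add hab hs) htrunc
  simpa only [Complex.ofReal_tsum, Complex.ofReal_mul, mul_left_comm _ Complex.I,
    tsum_mul_left] using h

theorem summable_mul_inv_abs_sub_add_inv_abs_add (ha : Summable a)
    (hs : s ∉ closure (range b ∪ range fun n ↦ -b n)) :
    Summable fun n ↦ a n * (|s - b n|⁻¹ + |s + b n|⁻¹) := by
  set S := range b ∪ range fun n ↦ -b n
  set δ := Metric.infDist s S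
  have hdist {y : ℝ} (hy : y ∈ S) : |s - y|⁻¹ ≤ δ⁻¹ :=
    inv_anti₀ ((Metric.infDist_pos_iff_notMem_closure ⟨y, hy⟩).mp hs)
      (Metric.infDist_le_dist_of_mem hy)
  refine .of_norm_bounded (ha.abs.mul_right (δ⁻¹ + δ⁻¹)) fun n ↦ ?_
  rw [norm_mul, Real.norm_of_nonneg (by positivity : 0 ≤ |s - b n|⁻¹ + |s + b n|⁻¹),
    Real.norm_eq_abs, ← sub_neg_eq_add s]
  exact mul_le_mul_of_nonneg_left
    (add_le_add (hdist (.inl ⟨n, rfl⟩)) (hdist (.inr ⟨n, rfl⟩))) (abs_nonneg _)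

end SineSeries

theorem stmt19_general {ι : Type*} [Countable ι] (a b : ι → ℝ)
    (hab : Summable fun n ↦ a n * |b n|) :
    (∀ c d : ℝ, IntegrableOn
      (fun x ↦ if x = 0 then 0 else ∑' n, a n * Real.sin (b n * x) / |x|) (Icc c d)) ∧
    ∀ s : ℝ, s ∉ range b ∪ range (fun n ↦ -b n) →
      (Summable fun n ↦ a n * (|s - b n|⁻¹ + |s + b n|⁻¹)) →
      (Summable fun n ↦ |a n * Real.log (|(s - b n) / (s + b n)|)|) ∧
      HasFourierHK
        (fun x ↦ (if x = 0 then 0 else ∑' n, a n * Real.sin (b n * x) / |x| : ℝ)) s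
        (Complex.I * (∑' n, a n * Real.log |(s - b n) / (s + b n)| : ℝ)) := by
  simp only [ite_tsum_mul_sin_div_abs]
  refine ⟨fun c d ↦ integrableOn_tsum_mul_sinDivAbs hab measure_Icc_lt_top.ne,
    fun s hs hsum ↦ ?_⟩
  have hsub (n : ι) : s - b n ≠ 0 := fun h ↦ hs (.inl ⟨n, (sub_eq_zero.mp h).symm⟩)
  have hadd (n : ι) : s + b n ≠ 0 := fun h ↦ hs (.inr ⟨n, (eq_neg_of_add_eq_zero_left h).symm⟩)
  exact ⟨summable_abs_mul_log hab hsum hsub hadd,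
    hasFourierHK_tsum_mul_sinDivAbs hab hsum hsub hadd⟩

/-- Example 2(f): for `f(x) = Σ aₙ sin(bₙ x)/|x|` with `aₙ > 0`, `Σ aₙ < ∞`,
`Σ aₙ |bₙ| < ∞`, the function `f` is locally integrable and, for `s` outside the closure
of `{±bₙ}`, `f̂(s) = i Σ aₙ log|(s − bₙ)/(s + bₙ)|`, the series converging absolutely. -/
theorem stmt19 (a b : ℕ → ℝ) (ha : ∀ n : ℕ, 0 < a n)
    (hsa : Summable a) (hsab : Summable (fun n : ℕ => a n * |b n|)) :
    (∀ c d : ℝ, IntegrableOn (fun x : ℝ =>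
        if x = 0 then (0:ℝ) else ∑' n : ℕ, a n * Real.sin (b n * x) / |x|) (Set.Icc c d)) ∧
    ∀ s : ℝ, s ∉ closure (Set.range b ∪ Set.range (fun n : ℕ => -b n)) →
      Summable (fun n : ℕ => abs (a n * Real.log (abs ((s - b n) / (s + b n))))) ∧
      HasFourierHK (fun x : ℝ =>
          (((if x = 0 then (0:ℝ) else ∑' n : ℕ, a n * Real.sin (b n * x) / |x|) : ℝ) : ℂ)) s
        (Complex.I *
          (((∑' n : ℕ, a n * Real.log (abs ((s - b n) / (s + b n)))) : ℝ) : ℂ)) :=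
  (stmt19_general a b hsab).imp_right fun h s hs ↦
    h s (notMem_subset subset_closure hs) (summable_mul_inv_abs_sub_add_inv_abs_add hsa hs)
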